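/- arXiv:1203.1294 — 2 statements merged into one kernel-verified Lean document; each statement's English description precedes it below -/
import Mathlib

section
/- Let R be a commutative Noetherian local ring, X an R-module, and let P_1 →∂ P_0 → M → 0 be a free presentation of a finitely generated R-module M (P_0, P_1 finitely generated free). Then there exist an integer n ≥ 0 and an exact sequence 0 → Hom_R(M,X) → Hom_R(P_0,X) →Hom(∂,X) Hom_R(P_1,X) → tr_X M ⊕ X^{⊕n} → 0. -/
/-!
Choose a minimal presentation `F₁ → F₀ → M → 0`, with differential `d`. The given presentation
`P₁ → P₀ → M → 0` is the direct sum of it, of an isomorphism `K₀ ≅ K₀`, and of `K → 0` for a finite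
free module `K`, so that the cokernel of `Hom(P₀, X) → Hom(P₁, X)` is `tr_X M ⊕ Hom(K, X)`.

The decomposition is carried by `exists_comparison`: Nakayama's lemma turns the comparison maps
between the two presentations into chain maps `(γ, α) : P → F` and `(t, s) : F → P` with
`γ t = 1`, `α s = 1`, together with `u : P₀ → P₁` such that `dl u = 1 - s α`, `γ u = 0`, `u s = 0`.
Then `1 - t γ - u dl` is a projection of `P₁` onto `K = ker γ ∩ ker dl`, which is therefore projective,
hence free. The map to the cokernel sends `f` to the class of `f ∘ t` and the restriction of `f`
to `K`.
-/

open TensorProduct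

noncomputable section

/-- The nonfree locus of a module: primes where the localization is a nonfree module. -/
def nonfreeLocus (R : Type) [CommRing R] (M : Type) [AddCommGroup M] [Module R M] :
    Set (PrimeSpectrum R) :=
  {p | ¬ Module.Free (Localization.AtPrime p.asIdeal) (LocalizedModule p.asIdeal.primeCompl M)}

/-- The nonfree locus of a subcategory of `mod R`. -/
def catNonfreeLocus (R : Type) [CommRing R] (𝒳 : Set (ModuleCat.{0} R)) :
    Set (PrimeSpectrum R) :=
  ⋃ M ∈ 𝒳, nonfreeLocus R M

/-- A resolving subcategory of the category of finitely generated `R`-modules: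
closed under isomorphism, consisting of finitely generated modules, containing `R`,
closed under direct summands, extensions and kernels of epimorphisms. -/
structure IsResolving (R : Type) [CommRing R] (𝒳 : Set (ModuleCat.{0} R)) : Prop where
  fg : ∀ M ∈ 𝒳, Module.Finite R M
  mem_of_iso : ∀ M N : ModuleCat.{0} R, Nonempty (M ≃ₗ[R] N) → M ∈ 𝒳 → N ∈ 𝒳
  ring_mem : ModuleCat.of R R ∈ 𝒳
  summand_mem : ∀ M N : ModuleCat.{0} R,
    (∃ (i : N →ₗ[R] M) (p : M →ₗ[R] N), p ∘ₗ i = LinearMap.id) → M ∈ 𝒳 → N ∈ 𝒳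
  extension_mem : ∀ (L M N : ModuleCat.{0} R) (f : L →ₗ[R] M) (g : M →ₗ[R] N),
    Function.Injective f → Function.Surjective g → Function.Exact f g →
      L ∈ 𝒳 → N ∈ 𝒳 → M ∈ 𝒳
  ker_epi_mem : ∀ (L M N : ModuleCat.{0} R) (f : L →ₗ[R] M) (g : M →ₗ[R] N),
    Function.Injective f → Function.Surjective g → Function.Exact f g →
      M ∈ 𝒳 → N ∈ 𝒳 → L ∈ 𝒳

/-- Membership in the additive closure `add 𝒴` of a subcategory `𝒴` of `mod S`:
direct summands of finite direct sums of modules in `𝒴`. -/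
def memAdd (S : Type) [CommRing S] (𝒴 : Set (ModuleCat.{0} S)) (N : Type)
    [AddCommGroup N] [Module S N] : Prop :=
  ∃ (n : ℕ) (Y : Fin n → ModuleCat.{0} S), (∀ i, Y i ∈ 𝒴) ∧
    ∃ (s : N →ₗ[S] ((i : Fin n) → Y i)) (r : ((i : Fin n) → Y i) →ₗ[S] N),
      r ∘ₗ s = LinearMap.id

/-- The subcategory `𝒳_p` of `mod R_p` consisting of localizations of modules in `𝒳`. -/
def locCat (R : Type) [CommRing R] (𝒳 : Set (ModuleCat.{0} R)) (p : PrimeSpectrum R) :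
    Set (ModuleCat.{0} (Localization.AtPrime p.asIdeal)) :=
  {N | ∃ X ∈ 𝒳, Nonempty
    (N ≃ₗ[Localization.AtPrime p.asIdeal] LocalizedModule p.asIdeal.primeCompl X)}

/-- `κ(p) ∈ add_{R_p} 𝒳_p`. -/
def kappaMemAdd (R : Type) [CommRing R] (𝒳 : Set (ModuleCat.{0} R)) (p : PrimeSpectrum R) :
    Prop :=
  memAdd (Localization.AtPrime p.asIdeal) (locCat R 𝒳 p)
    (IsLocalRing.ResidueField (Localization.AtPrime p.asIdeal))

/-- A specialization-closed subset of `Spec R`. -/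
def SpecClosed (R : Type) [CommRing R] (Φ : Set (PrimeSpectrum R)) : Prop :=
  ∀ p ∈ Φ, ∀ q : PrimeSpectrum R, p.asIdeal ≤ q.asIdeal → q ∈ Φ

/-- `s(R)`: the set of primes `p` such that `R_p` is not a field. -/
def nonFieldLocus (R : Type) [CommRing R] : Set (PrimeSpectrum R) :=
  {p | ¬ IsField (Localization.AtPrime p.asIdeal)}

/-- A (Noetherian) local ring is regular iff its maximal ideal is generated by
`dim` many elements. -/
def IsRegularLoc (A : Type) [CommRing A] [IsLocalRing A] : Prop :=
  ∃ (n : ℕ) (x : Fin n → A), ringKrullDim A = (n : ℕ) ∧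
    Ideal.span (Set.range x) = IsLocalRing.maximalIdeal A

/-- The singular locus of `R`. -/
def singLocus (R : Type) [CommRing R] : Set (PrimeSpectrum R) :=
  {p | ¬ IsRegularLoc (Localization.AtPrime p.asIdeal)}

/-- `V^{-1}(Φ)`: finitely generated modules whose nonfree locus is contained in `Φ`. -/
def Vinv (R : Type) [CommRing R] (Φ : Set (PrimeSpectrum R)) : Set (ModuleCat.{0} R) :=
  {M | Module.Finite R M ∧ nonfreeLocus R M ⊆ Φ}

/-- The depth of a module: supremum of lengths of regular sequences in the maximal ideal. -/
def seqDepth (R : Type) [CommRing R] [IsLocalRing R] (M : Type) [AddCommGroup M]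
    [Module R M] : ℕ∞ :=
  sSup {n : ℕ∞ | ∃ rs : List R, (rs.length : ℕ∞) = n ∧
    (∀ r ∈ rs, r ∈ IsLocalRing.maximalIdeal R) ∧ RingTheory.Sequence.IsRegular M rs}

/-- A local ring is Cohen–Macaulay if its depth equals its Krull dimension. -/
def IsCMLocalRing (R : Type) [CommRing R] [IsLocalRing R] : Prop :=
  (seqDepth R R : WithBot ℕ∞) = ringKrullDim R

/-- A module over a local ring is Cohen–Macaulay ("maximal Cohen–Macaulay") if its depth
equals the Krull dimension of the ring. -/
def IsCMModule (R : Type) [CommRing R] [IsLocalRing R] (M : Type) [AddCommGroup M]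
    [Module R M] : Prop :=
  (seqDepth R M : WithBot ℕ∞) = ringKrullDim R

/-- The subcategory `CM(R)` of `mod R` of (maximal) Cohen–Macaulay modules. -/
def CMcat (R : Type) [CommRing R] [IsLocalRing R] : Set (ModuleCat.{0} R) :=
  {M | Module.Finite R M ∧ IsCMModule R M}

/-- `V_CM^{-1}(Φ)`: Cohen–Macaulay modules whose nonfree locus is contained in `Φ`. -/
def VinvCM (R : Type) [CommRing R] [IsLocalRing R] (Φ : Set (PrimeSpectrum R)) :
    Set (ModuleCat.{0} R) :=
  {M | Module.Finite R M ∧ IsCMModule R M ∧ nonfreeLocus R M ⊆ Φ}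

/-- `IsSyzygyOf R n M S` : `S` is an `n`-th syzygy of `M` in a minimal free resolution,
i.e. `S ≅ Ω^n M`. -/
def IsSyzygyOf (R : Type) [CommRing R] [IsLocalRing R] :
    ℕ → ModuleCat.{0} R → ModuleCat.{0} R → Prop
  | 0, M, S => Nonempty (S ≃ₗ[R] M)
  | n + 1, M, S => ∃ (m : ℕ) (π : (Fin m → R) →ₗ[R] M), Function.Surjective π ∧
      LinearMap.ker π ≤ (IsLocalRing.maximalIdeal R) • (⊤ : Submodule R (Fin m → R)) ∧
      IsSyzygyOf R n (ModuleCat.of R (LinearMap.ker π)) S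

/-- `IsTransposeOf R X M T` : `T` is (isomorphic to) the transpose `tr_X M` of `M`
with respect to `X`, computed from a minimal free presentation of `M`. -/
def IsTransposeOf (R : Type) [CommRing R] [IsLocalRing R] (X : Type) [AddCommGroup X]
    [Module R X] (M : Type) [AddCommGroup M] [Module R M] (T : Type) [AddCommGroup T]
    [Module R T] : Prop :=
  ∃ (n m : ℕ) (dl : (Fin n → R) →ₗ[R] (Fin m → R)) (π : (Fin m → R) →ₗ[R] M),
    Function.Surjective π ∧ Function.Exact dl π ∧
    LinearMap.ker π ≤ (IsLocalRing.maximalIdeal R) • (⊤ : Submodule R (Fin m → R)) ∧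
    LinearMap.ker dl ≤ (IsLocalRing.maximalIdeal R) • (⊤ : Submodule R (Fin n → R)) ∧
    Nonempty (T ≃ₗ[R]
      (((Fin n → R) →ₗ[R] X) ⧸ LinearMap.range (LinearMap.lcomp R X dl)))

/-- `𝒳` is closed under tensor products. -/
def ClosedUnderTensor (R : Type) [CommRing R] (𝒳 : Set (ModuleCat.{0} R)) : Prop :=
  ∀ X ∈ 𝒳, ∀ Y ∈ 𝒳, ModuleCat.of R (TensorProduct R X Y) ∈ 𝒳

/-- `𝒳` is closed under (Auslander) transposes. -/
def ClosedUnderTranspose (R : Type) [CommRing R] [IsLocalRing R]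
    (𝒳 : Set (ModuleCat.{0} R)) : Prop :=
  ∀ M ∈ 𝒳, ∀ T : ModuleCat.{0} R, IsTransposeOf R R M T → T ∈ 𝒳


/-- The subcategory `add R` of direct summands of finitely generated free modules. -/
def addRCat (R : Type) [CommRing R] : Set (ModuleCat.{0} R) :=
  {M | ∃ (n : ℕ) (i : M →ₗ[R] (Fin n → R)) (p : (Fin n → R) →ₗ[R] M),
    p ∘ₗ i = LinearMap.id}

/-- A thick subcategory of `CM(R)`: closed under isomorphisms and direct summands, and
satisfying two-out-of-three for short exact sequences of Cohen-Macaulay modules. -/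
structure IsThickCM (R : Type) [CommRing R] [IsLocalRing R]
    (𝒳 : Set (ModuleCat.{0} R)) : Prop where
  subset_cm : 𝒳 ⊆ CMcat R
  mem_of_iso : ∀ M N : ModuleCat.{0} R, Nonempty (M ≃ₗ[R] N) → M ∈ 𝒳 → N ∈ 𝒳
  summand_mem : ∀ M N : ModuleCat.{0} R,
    (∃ (i : N →ₗ[R] M) (p : M →ₗ[R] N), p ∘ₗ i = LinearMap.id) → M ∈ 𝒳 → N ∈ 𝒳
  two_of_three : ∀ (L M N : ModuleCat.{0} R), L ∈ CMcat R → M ∈ CMcat R → N ∈ CMcat R →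
    ∀ (f : L →ₗ[R] M) (g : M →ₗ[R] N),
      Function.Injective f → Function.Surjective g → Function.Exact f g →
        ((L ∈ 𝒳 → M ∈ 𝒳 → N ∈ 𝒳) ∧ (L ∈ 𝒳 → N ∈ 𝒳 → M ∈ 𝒳) ∧ (M ∈ 𝒳 → N ∈ 𝒳 → L ∈ 𝒳))

/-- A local ring with infinite residue field has minimal multiplicity iff the square of the
maximal ideal equals `Q * m` for a parameter ideal `Q = (x_1, …, x_d)` generated by
`d = dim` many elements of `m`. -/
def HasMinimalMultiplicity (A : Type) [CommRing A] [IsLocalRing A] : Prop :=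
  ∃ (n : ℕ) (x : Fin n → A), ringKrullDim A = (n : ℕ) ∧
    (∀ i, x i ∈ IsLocalRing.maximalIdeal A) ∧
    (IsLocalRing.maximalIdeal A) ^ 2 =
      Ideal.span (Set.range x) * IsLocalRing.maximalIdeal A

/-- A map from a projective module lifts through `d` as soon as its values lie in `range d`. -/
lemma exists_lift_of_forall_mem_range {R P A B : Type} [CommRing R]
    [AddCommGroup P] [Module R P] [Module.Projective R P]
    [AddCommGroup A] [Module R A] [AddCommGroup B] [Module R B]
    (d : A →ₗ[R] B) (f : P →ₗ[R] B) (hf : ∀ x, ∃ a, d a = f x) :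
    ∃ h : P →ₗ[R] A, ∀ x, d (h x) = f x := by
  obtain ⟨h, hh⟩ := Module.projective_lifting_property d.rangeRestrict
    (f.codRestrict (LinearMap.range d) fun x => hf x) d.surjective_rangeRestrict
  refine ⟨h, fun x => ?_⟩
  exact congrArg Subtype.val (LinearMap.congr_fun hh x)

/-- Essential surjectivity of a minimal map: if `ker d ⊆ 𝔪F`, a map `g` into `F` is onto as soon
as `d ∘ g` has the same range as `d`, by Nakayama's lemma. -/
lemma surjective_of_ker_le {R F G B : Type} [CommRing R] [IsLocalRing R]
    [AddCommGroup F] [Module R F] [Module.Finite R F]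
    [AddCommGroup G] [Module R G] [AddCommGroup B] [Module R B]
    (d : F →ₗ[R] B) (hd : LinearMap.ker d ≤ IsLocalRing.maximalIdeal R • (⊤ : Submodule R F))
    (g : G →ₗ[R] F) (hg : ∀ y, ∃ x, d (g x) = d y) : Function.Surjective g := by
  rw [← LinearMap.range_eq_top, eq_top_iff]
  refine Submodule.le_of_le_smul_of_le_jacobson_bot Module.Finite.fg_top
    (IsLocalRing.maximalIdeal_le_jacobson _) fun y _ => ?_
  obtain ⟨x, hx⟩ := hg y
  refine Submodule.mem_sup.2 ⟨g x, ⟨x, rfl⟩, y - g x, hd ?_, by abel⟩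
  simp [hx]

/-- Every finitely generated module over a local ring has a minimal free cover: lift a basis of
`k ⊗ M` to `M`. -/
lemma exists_minimal_cover (R M : Type) [CommRing R] [IsLocalRing R]
    [AddCommGroup M] [Module R M] [Module.Finite R M] :
    ∃ (m : ℕ) (p : (Fin m → R) →ₗ[R] M), Function.Surjective p ∧
      LinearMap.ker p ≤ IsLocalRing.maximalIdeal R • (⊤ : Submodule R (Fin m → R)) := by
  let k := IsLocalRing.ResidueField R
  let b := Module.finBasis k (k ⊗[R] M)
  obtain ⟨v, hv⟩ := (TensorProduct.mk_surjective R M k Ideal.Quotient.mk_surjective).comp_left b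
  have hv' : ∀ i, (1 : k) ⊗ₜ[R] v i = b i := congrFun hv
  refine ⟨_, Fintype.linearCombination R v, ?_, fun x hx => ?_⟩
  · rw [← LinearMap.range_eq_top, Fintype.range_linearCombination]
    exact IsLocalRing.span_eq_top_of_tmul_eq_basis v b hv'
  · have h0 : ∑ i, (IsLocalRing.residue R (x i)) • b i = 0 := by
      have h1 : (1 : k) ⊗ₜ[R] (Fintype.linearCombination R v x) = 0 := by
        rw [LinearMap.mem_ker.1 hx, TensorProduct.tmul_zero]
      rw [Fintype.linearCombination_apply, TensorProduct.tmul_sum] at h1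
      rw [← h1]
      refine Finset.sum_congr rfl fun i _ => ?_
      rw [TensorProduct.tmul_smul, hv']
      exact algebraMap_smul k (x i) (b i)
    have h2 := Fintype.linearIndependent_iff.1 b.linearIndependent _ h0
    rw [pi_eq_sum_univ x]
    refine Submodule.sum_mem _ fun i _ => Submodule.smul_mem_smul ?_ trivial
    exact (IsLocalRing.residue_eq_zero_iff _).1 (h2 i)

/-- Comparison of a free presentation with a minimal one. The chain maps `(γ, α)` and `(t, s)`
exhibit `d : F₁ → F₀` as a direct summand of `dl : P₁ → P₀`, and `u` is a homotopy which makes the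
complement contractible in degree `0`. -/
lemma exists_comparison (R : Type) [CommRing R] [IsNoetherianRing R] [IsLocalRing R]
    (M P₁ P₀ : Type) [AddCommGroup M] [Module R M]
    [AddCommGroup P₁] [Module R P₁] [AddCommGroup P₀] [Module R P₀]
    [Module.Projective R P₁] [Module.Projective R P₀]
    (dl : P₁ →ₗ[R] P₀) (π : P₀ →ₗ[R] M)
    (hπ : Function.Surjective π) (hex : Function.Exact dl π)
    (F₁ F₀ : Type) [AddCommGroup F₁] [Module R F₁] [AddCommGroup F₀] [Module R F₀]
    [Module.Projective R F₁] [Module.Projective R F₀] [Module.Finite R F₁] [Module.Finite R F₀]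
    (d : F₁ →ₗ[R] F₀) (p : F₀ →ₗ[R] M)
    (hp : Function.Surjective p) (hdp : Function.Exact d p)
    (hkp : LinearMap.ker p ≤ IsLocalRing.maximalIdeal R • (⊤ : Submodule R F₀))
    (hkd : LinearMap.ker d ≤ IsLocalRing.maximalIdeal R • (⊤ : Submodule R F₁)) :
    ∃ (α : P₀ →ₗ[R] F₀) (s : F₀ →ₗ[R] P₀) (γ : P₁ →ₗ[R] F₁) (t : F₁ →ₗ[R] P₁)
      (u : P₀ →ₗ[R] P₁),
      (∀ y, α (s y) = y) ∧ (∀ y, γ (t y) = y) ∧ (∀ x, d (γ x) = α (dl x)) ∧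
      (∀ y, dl (t y) = s (d y)) ∧ (∀ x, dl (u x) = x - s (α x)) ∧
      (∀ x, γ (u x) = 0) ∧ (∀ y, u (s y) = 0) := by
  obtain ⟨α, hα⟩ := exists_lift_of_forall_mem_range p π fun x => hp _
  have hαs : Function.Surjective α := surjective_of_ker_le p hkp α fun y => by
    obtain ⟨x, hx⟩ := hπ (p y)
    exact ⟨x, by rw [hα, hx]⟩
  obtain ⟨s, hs⟩ := exists_lift_of_forall_mem_range α LinearMap.id fun x => hαs _
  simp only [LinearMap.id_apply] at hs
  have hπs : ∀ y, π (s y) = p y := fun y => by rw [← hα, hs]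
  obtain ⟨γ₀, hγ₀⟩ := exists_lift_of_forall_mem_range d (α ∘ₗ dl) fun x =>
    (hdp _).1 (by rw [LinearMap.comp_apply, hα, hex.apply_apply_eq_zero])
  obtain ⟨t, ht⟩ := exists_lift_of_forall_mem_range dl (s ∘ₗ d) fun x =>
    (hex _).1 (by rw [LinearMap.comp_apply, hπs, hdp.apply_apply_eq_zero])
  simp only [LinearMap.comp_apply] at hγ₀ ht
  -- `γ₀ ∘ t` lies over the identity of `range d`, hence is an automorphism of `F₁`;
  -- correcting `γ₀` by its inverse makes `t` a section.
  have hθ : ∀ y, d ((γ₀ ∘ₗ t) y) = d y := fun y => by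
    rw [LinearMap.comp_apply, hγ₀, ht, hs]
  have hbij : Function.Bijective (γ₀ ∘ₗ t) :=
    OrzechProperty.bijective_of_surjective_endomorphism _
      (surjective_of_ker_le d hkd _ fun y => ⟨y, hθ y⟩)
  let e := LinearEquiv.ofBijective (γ₀ ∘ₗ t) hbij
  have he : ∀ y, d (e.symm y) = d y := fun y => by
    rw [← hθ (e.symm y)]
    exact congrArg d (e.apply_symm_apply y)
  have hγt : ∀ y, e.symm (γ₀ (t y)) = y := fun y => e.symm_apply_apply y
  have hγ : ∀ x, d (e.symm (γ₀ x)) = α (dl x) := fun x => by rw [he, hγ₀]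
  obtain ⟨u, hu⟩ := exists_lift_of_forall_mem_range dl (LinearMap.id - s ∘ₗ α) fun x =>
    (hex _).1 (by simp [hπs, hα])
  simp only [LinearMap.sub_apply, LinearMap.id_apply, LinearMap.comp_apply] at hu
  refine ⟨α, s, e.symm.toLinearMap ∘ₗ γ₀, t,
    (LinearMap.id - t ∘ₗ e.symm.toLinearMap ∘ₗ γ₀) ∘ₗ u ∘ₗ (LinearMap.id - s ∘ₗ α),
    hs, hγt, hγ, ht, fun x => ?_, fun x => ?_, fun y => ?_⟩
  · simp [ht, hγ, hu, hs]
  · simp [hγt]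
  · simp [hs]

/-- From any free presentation `P₁ → P₀ → M → 0` one gets an exact sequence
`0 → Hom(M,X) → Hom(P₀,X) → Hom(P₁,X) → tr_X M ⊕ X^n → 0` for some `n ≥ 0`. -/
theorem transposeOf_four_term_exact
    (R : Type) [CommRing R] [IsNoetherianRing R] [IsLocalRing R]
    (X : Type) [AddCommGroup X] [Module R X]
    (M : Type) [AddCommGroup M] [Module R M] [Module.Finite R M]
    (P₁ P₀ : Type) [AddCommGroup P₁] [Module R P₁] [AddCommGroup P₀] [Module R P₀]
    [Module.Finite R P₁] [Module.Free R P₁] [Module.Finite R P₀] [Module.Free R P₀]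
    (dl : P₁ →ₗ[R] P₀) (π : P₀ →ₗ[R] M)
    (hπ : Function.Surjective π) (hex : Function.Exact dl π) :
    ∃ (n : ℕ) (T : ModuleCat.{0} R), IsTransposeOf R X M T ∧
      ∃ q : (P₁ →ₗ[R] X) →ₗ[R] (↥T × (Fin n → X)),
        Function.Injective (LinearMap.lcomp R X π) ∧
        Function.Exact (LinearMap.lcomp R X π) (LinearMap.lcomp R X dl) ∧
        Function.Exact (LinearMap.lcomp R X dl) q ∧
        Function.Surjective q := by
  obtain ⟨m, p, hp, hkp⟩ := exists_minimal_cover R M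
  obtain ⟨l, c, hc, hkc⟩ := exists_minimal_cover R (LinearMap.ker p)
  let d : (Fin l → R) →ₗ[R] (Fin m → R) := (LinearMap.ker p).subtype ∘ₗ c
  have hkd : LinearMap.ker d ≤ IsLocalRing.maximalIdeal R • (⊤ : Submodule R (Fin l → R)) :=
    fun x hx => hkc (Subtype.ext hx)
  have hdp : Function.Exact d p := fun y =>
    ⟨fun hy => (hc ⟨y, hy⟩).imp fun x hx => congrArg Subtype.val hx,
      fun ⟨x, hx⟩ => hx ▸ (c x).2⟩
  obtain ⟨α, s, γ, t, u, hαs, hγt, hdγ, hdt, hdu, hγu, hus⟩ :=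
    exists_comparison R M P₁ P₀ dl π hπ hex _ _ d p hp hdp hkp hkd
  -- `P₁ ≅ F₁ ⊕ K₀ ⊕ K` where `dl` kills `K` and `K₀` is the kernel of `α`; `ρ` projects to `K`.
  let K : Submodule R P₁ := LinearMap.ker γ ⊓ LinearMap.ker dl
  let ρ : P₁ →ₗ[R] K := (LinearMap.id - t ∘ₗ γ - u ∘ₗ dl).codRestrict K fun x => by
    refine ⟨?_, ?_⟩
    · simp [hγt, hγu]
    · simp [hdt, hdγ, hdu]
  have hρ : ∀ x, ((ρ x : K) : P₁) = x - t (γ x) - u (dl x) := fun x => rfl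
  have hρK : ∀ x : K, ρ x = x := fun x => Subtype.ext <| by
    rw [hρ, LinearMap.mem_ker.1 x.2.1, LinearMap.mem_ker.1 x.2.2]
    simp
  have hρt : ∀ y, ρ (t y) = 0 := fun y => Subtype.ext <| by
    simp [hρ, hγt, hdt, hus]
  have : Module.Projective R K := Module.Projective.of_split K.subtype ρ (LinearMap.ext hρK)
  have : Module.Free R K := Module.free_of_flat_of_isLocalRing
  let b := Module.finBasis R K
  let N := LinearMap.range (LinearMap.lcomp R X d)
  let Φ : (K →ₗ[R] X) ≃ₗ[R] (Fin (Module.finrank R K) → X) := (b.constr R).symm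
  refine ⟨Module.finrank R K, ModuleCat.of R (((Fin l → R) →ₗ[R] X) ⧸ N),
    ⟨l, m, d, p, hp, hdp, hkp, hkd, ⟨LinearEquiv.refl R _⟩⟩,
    (N.mkQ ∘ₗ LinearMap.lcomp R X t).prod (Φ.toLinearMap ∘ₗ LinearMap.lcomp R X K.subtype),
    LinearMap.lcomp_injective_of_surjective π hπ,
    LinearMap.exact_lcomp_of_exact_of_surjective X hex hπ, fun f => ⟨fun hf => ?_, ?_⟩, ?_⟩
  · obtain ⟨h1, h2⟩ := Prod.ext_iff.1 hf
    obtain ⟨h, hh⟩ : LinearMap.lcomp R X t f ∈ N := (Submodule.Quotient.mk_eq_zero N).1 h1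
    have hft : ∀ y, f (t y) = h (d y) := fun y => (LinearMap.congr_fun hh y).symm
    have hfK : LinearMap.lcomp R X K.subtype f = 0 := Φ.map_eq_zero_iff.1 h2
    -- `f = f ∘ t ∘ γ + f ∘ u ∘ dl + f ∘ ρ`, with `f ∘ t ∘ γ = h ∘ d ∘ γ = h ∘ α ∘ dl` and `f ∘ ρ = 0`.
    refine ⟨h ∘ₗ α + f ∘ₗ u, LinearMap.ext fun x => ?_⟩
    have h3 : f (x - t (γ x) - u (dl x)) = 0 := LinearMap.congr_fun hfK (ρ x)
    rw [map_sub, map_sub, hft, hdγ, sub_sub, sub_eq_zero] at h3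
    exact h3.symm
  · rintro ⟨g, rfl⟩
    refine Prod.ext ((Submodule.Quotient.mk_eq_zero N).2 ⟨g ∘ₗ s, ?_⟩)
      (Φ.map_eq_zero_iff.2 ?_)
    · ext1 y
      exact LinearMap.ext fun r => by simp [hdt]
    · exact LinearMap.ext fun x => by
        simp [LinearMap.mem_ker.1 x.2.2]
  · rintro ⟨y, z⟩
    obtain ⟨h, rfl⟩ := N.mkQ_surjective y
    refine ⟨h ∘ₗ γ + Φ.symm z ∘ₗ ρ, Prod.ext (congrArg N.mkQ ?_) ?_⟩
    · exact LinearMap.ext fun y => by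
        simp [hγt, hρt]
    · refine (congrArg Φ ?_).trans (Φ.apply_symm_apply z)
      exact LinearMap.ext fun x => by
        simp [hρK, LinearMap.mem_ker.1 x.2.1]

end
end

section
/- Let R be a commutative Noetherian local ring with maximal ideal m satisfying m² = 0. Then the only resolving subcategories of mod R are add R (the finitely generated free modules and their summands) and mod R itself. -/
/-!
Let `𝒳` be a resolving subcategory; it always contains `add R`. Suppose that it also contains
some `M` outside `add R`, and let `π : Rⁿ → M` be a minimal free cover. Its kernel lies in `𝒳`,
is nonzero, and is contained in `m Rⁿ`, hence killed by `m` as `m² = 0`. So it is a nonzero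
vector space over `k = R / m`, and its summand `k` lies in `𝒳` (`IsResolving.residue_mem`).

Conversely, if `k ∈ 𝒳`, then every finitely generated `M` is an extension of the `k`-vector
space `M / mM` by `mM`, which is a `k`-vector space too since `m² = 0`
(`IsResolving.mem_of_residue_mem`). Hence `𝒳 = mod R`.
-/

open TensorProduct

noncomputable section

section Helpers

variable {R : Type} [CommRing R]

namespace IsResolving

variable {𝒳 : Set (ModuleCat.{0} R)}

lemma pi_mem (h : IsResolving R 𝒳) {X : ModuleCat.{0} R} (hX : X ∈ 𝒳) (n : ℕ) :
    ModuleCat.of R (Fin n → X) ∈ 𝒳 := by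
  induction n with
  | zero =>
    refine h.summand_mem (ModuleCat.of R R) _ ⟨0, 0, ?_⟩ h.ring_mem
    exact LinearMap.ext fun x => funext fun i => i.elim0
  | succ n ih =>
    refine h.extension_mem X (ModuleCat.of R (Fin (n + 1) → X)) (ModuleCat.of R (Fin n → X))
      (LinearMap.single R (fun _ => X) 0) (LinearMap.funLeft R X Fin.succ) ?_ ?_ ?_ hX ih
    · exact Pi.single_injective (M := fun _ : Fin (n + 1) => X) 0
    · exact LinearMap.funLeft_surjective_of_injective R X _ (Fin.succ_injective n)
    · intro y
      constructor
      · intro hy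
        refine ⟨y 0, ?_⟩
        ext i
        refine Fin.cases ?_ (fun j => ?_) i
        · simp
        · have : y j.succ = 0 := congrFun hy j
          simpa using this.symm
      · rintro ⟨x, rfl⟩
        refine funext fun j => ?_
        change Pi.single (M := fun _ : Fin (n + 1) => X) 0 x j.succ = 0
        simp

lemma addRCat_subset (h : IsResolving R 𝒳) : addRCat R ⊆ 𝒳 := by
  rintro M ⟨n, i, p, hp⟩
  exact h.summand_mem (ModuleCat.of R (Fin n → R)) M ⟨i, p, hp⟩ (h.pi_mem h.ring_mem n)

end IsResolving

variable [IsLocalRing R]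

open IsLocalRing

/-- A finitely generated module killed by the maximal ideal is a finite-dimensional vector
space over the residue field, hence a finite power of it. -/
lemma exists_equiv_pi_of_maximalIdeal_smul (V : Type) [AddCommGroup V] [Module R V]
    [Module.Finite R V] (hV : ∀ r ∈ maximalIdeal R, ∀ v : V, r • v = 0) :
    ∃ n : ℕ, Nonempty (V ≃ₗ[R] (Fin n → R ⧸ maximalIdeal R)) := by
  have hT : Module.IsTorsionBySet R V (maximalIdeal R : Set R) := fun v r => hV r.1 r.2 v
  let : Module (R ⧸ maximalIdeal R) V := hT.module
  have : IsScalarTower R (R ⧸ maximalIdeal R) V := hT.isScalarTower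
  let : Field (R ⧸ maximalIdeal R) := Ideal.Quotient.field _
  have : Module.Finite (R ⧸ maximalIdeal R) V := Module.Finite.of_restrictScalars_finite R _ _
  exact ⟨_, ⟨(Module.finBasis (R ⧸ maximalIdeal R) V).equivFun.restrictScalars R⟩⟩

/-- Every finitely generated module has a minimal free cover: lift a basis of `M / mM`.
Nakayama's lemma gives surjectivity, linear independence modulo `m` the bound on the kernel. -/
lemma exists_minimal_cover_s13 (M : Type) [AddCommGroup M] [Module R M] [Module.Finite R M] :
    ∃ (n : ℕ) (π : (Fin n → R) →ₗ[R] M), Function.Surjective π ∧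
      ∀ a ∈ LinearMap.ker π, ∀ i, a i ∈ maximalIdeal R := by
  let S : Submodule R M := maximalIdeal R • ⊤
  obtain ⟨n, ⟨e⟩⟩ := exists_equiv_pi_of_maximalIdeal_smul (R := R) (M ⧸ S) (by
    intro r hr v
    obtain ⟨x, rfl⟩ := S.mkQ_surjective v
    rw [← map_smul, Submodule.mkQ_apply, Submodule.Quotient.mk_eq_zero]
    exact Submodule.smul_mem_smul hr trivial)
  let q : M →ₗ[R] (Fin n → R ⧸ maximalIdeal R) := e.toLinearMap ∘ₗ S.mkQ
  have hq : Function.Surjective q := e.surjective.comp S.mkQ_surjective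
  have hker : LinearMap.ker q = S := by
    simp [q, LinearMap.ker_comp]
  choose x hx using fun i => hq (Pi.single i 1)
  let π : (Fin n → R) →ₗ[R] M := Fintype.linearCombination R x
  have hπ : ∀ a i, q (π a) i = Ideal.Quotient.mk (maximalIdeal R) (a i) := by
    intro a i
    simp [π, Fintype.linearCombination_apply, map_sum, hx, Finset.sum_apply, Pi.single_apply,
      Algebra.smul_def]
  refine ⟨n, π, ?_, ?_⟩
  · rw [← LinearMap.range_eq_top, ← top_le_iff]
    refine Submodule.le_of_le_smul_of_le_jacobson_bot (I := maximalIdeal R)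
      Module.Finite.fg_top (IsLocalRing.maximalIdeal_le_jacobson _) ?_
    intro y _
    choose a ha using fun i => Ideal.Quotient.mk_surjective (q y i)
    have hy : y - π a ∈ S := by
      rw [← hker, LinearMap.mem_ker, map_sub, sub_eq_zero]
      ext i
      rw [hπ, ha]
    rw [← add_sub_cancel (π a) y]
    exact Submodule.add_mem_sup ⟨a, rfl⟩ hy
  · intro a ha i
    rw [← Ideal.Quotient.eq_zero_iff_mem, ← hπ, LinearMap.mem_ker.1 ha]
    simp

/-- If `𝒳` contains a module that is not projective, its first syzygy is a nonzero vector space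
over the residue field because `m² = 0`, so the residue field is a summand of it. -/
lemma IsResolving.residue_mem (hm : maximalIdeal R ^ 2 = ⊥) [IsNoetherianRing R]
    {𝒳 : Set (ModuleCat.{0} R)} (h : IsResolving R 𝒳) {M : ModuleCat.{0} R} (hM : M ∈ 𝒳)
    (hMR : M ∉ addRCat R) : ModuleCat.of R (R ⧸ maximalIdeal R) ∈ 𝒳 := by
  have := h.fg M hM
  obtain ⟨n, π, hπ, hker⟩ := exists_minimal_cover_s13 (R := R) M
  let K := LinearMap.ker π
  have hK : ModuleCat.of R K ∈ 𝒳 :=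
    h.ker_epi_mem _ (ModuleCat.of R (Fin n → R)) M K.subtype π K.subtype_injective hπ
      (LinearMap.exact_subtype_ker_map π) (h.pi_mem h.ring_mem n) hM
  obtain ⟨d, ⟨e⟩⟩ := exists_equiv_pi_of_maximalIdeal_smul (R := R) K (by
    rintro r hr ⟨a, ha⟩
    ext i
    have : r * a i ∈ maximalIdeal R ^ 2 := by
      rw [pow_two]
      exact Ideal.mul_mem_mul hr (hker a ha i)
    rw [hm] at this
    simpa using this)
  rcases Nat.eq_zero_or_pos d with rfl | hd
  · -- A zero syzygy would make the cover `π` an isomorphism.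
    refine absurd ?_ hMR
    have hinj : Function.Injective π := by
      rw [← LinearMap.ker_eq_bot, ← Submodule.subsingleton_iff_eq_bot]
      exact e.injective.subsingleton
    let E := LinearEquiv.ofBijective π ⟨hinj, hπ⟩
    exact ⟨n, E.symm.toLinearMap, π, LinearMap.ext fun y => E.apply_symm_apply y⟩
  · refine h.summand_mem (ModuleCat.of R K) _ ⟨e.symm.toLinearMap ∘ₗ
      LinearMap.single R (fun _ => R ⧸ maximalIdeal R) ⟨0, hd⟩,
      LinearMap.proj ⟨0, hd⟩ ∘ₗ e.toLinearMap, ?_⟩ hK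
    refine LinearMap.ext fun y => ?_
    simp

/-- Once the residue field lies in `𝒳`, so does every finitely generated `M`: both ends of
`0 → mM → M → M/mM → 0` are killed by `m`, the left one because `m² = 0`. -/
lemma IsResolving.mem_of_residue_mem (hm : maximalIdeal R ^ 2 = ⊥) [IsNoetherianRing R]
    {𝒳 : Set (ModuleCat.{0} R)} (h : IsResolving R 𝒳)
    (hk : ModuleCat.of R (R ⧸ maximalIdeal R) ∈ 𝒳) (M : ModuleCat.{0} R) [Module.Finite R M] :
    M ∈ 𝒳 := by
  have key : ∀ (V : Type) [AddCommGroup V] [Module R V] [Module.Finite R V],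
      (∀ r ∈ maximalIdeal R, ∀ v : V, r • v = 0) → ModuleCat.of R V ∈ 𝒳 := by
    intro V _ _ _ hV
    obtain ⟨n, ⟨e⟩⟩ := exists_equiv_pi_of_maximalIdeal_smul V hV
    exact h.mem_of_iso _ _ ⟨e.symm⟩ (h.pi_mem hk n)
  let S : Submodule R M := maximalIdeal R • ⊤
  refine h.extension_mem (ModuleCat.of R S) M (ModuleCat.of R (M ⧸ S)) S.subtype S.mkQ
    S.subtype_injective S.mkQ_surjective (LinearMap.exact_subtype_mkQ S) (key S ?_) (key _ ?_)
  · rintro r hr ⟨v, hv⟩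
    have : r • v ∈ maximalIdeal R • maximalIdeal R • (⊤ : Submodule R M) :=
      Submodule.smul_mem_smul hr hv
    rw [← Submodule.mul_smul, ← pow_two, hm, Submodule.bot_smul, Submodule.mem_bot] at this
    exact Subtype.ext this
  · intro r hr v
    obtain ⟨x, rfl⟩ := S.mkQ_surjective v
    rw [← map_smul, Submodule.mkQ_apply, Submodule.Quotient.mk_eq_zero]
    exact Submodule.smul_mem_smul hr trivial

end Helpers

/-- If `m² = 0`, the only resolving subcategories of `mod R` are `add R`
and `mod R`. -/
theorem resolving_eq_addR_or_top_of_sq_zero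
    (R : Type) [CommRing R] [IsNoetherianRing R] [IsLocalRing R]
    (hm : (IsLocalRing.maximalIdeal R) ^ 2 = ⊥)
    (𝒳 : Set (ModuleCat.{0} R)) (h𝒳 : IsResolving R 𝒳) :
    𝒳 = addRCat R ∨ 𝒳 = {M : ModuleCat.{0} R | Module.Finite R M} := by
  by_cases hsub : 𝒳 ⊆ addRCat R
  · exact Or.inl (hsub.antisymm h𝒳.addRCat_subset)
  · obtain ⟨M, hM, hMR⟩ := Set.not_subset.1 hsub
    refine Or.inr (Set.Subset.antisymm h𝒳.fg fun N hN => ?_)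
    have : Module.Finite R N := hN
    exact h𝒳.mem_of_residue_mem hm (h𝒳.residue_mem hm hM hMR) N

end
end
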